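/- arXiv:1609.09378 — 3 statements merged into one kernel-verified Lean document; each statement's English description precedes it below -/
import Mathlib

section
/- Let g : V → (−∞,+∞] be a weakly lower semicontinuous function on a separable real Hilbert space V, not identically +∞, such that its biconjugate g** is proper and coercive. Let G be the set of global minimizers of g and G** the set of global minimizers of g**. Then: (i) G** is a closed, bounded, convex set containing G; (ii) every extreme point of G** belongs to G; (iii) the closed convex hull of the set of extreme points of G** equals G**. -/
open scoped InnerProductSpace RealInnerProductSpace ENNReal Topology
open Filter

noncomputable section

/-- The Legendre transform (Fenchel conjugate) of an extended-real-valued function. -/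
def legendre {V : Type*} [NormedAddCommGroup V] [InnerProductSpace ℝ V]
    (g : V → EReal) (y : V) : EReal :=
  ⨆ x : V, (((⟪x, y⟫_ℝ : ℝ) : EReal) - g x)

section Milman

variable {E : Type*} [AddCommGroup E] [Module ℝ E] [TopologicalSpace E]
  [IsTopologicalAddGroup E] [ContinuousSMul ℝ E]

protected theorem IsCompact.convexJoin {s t : Set E} (hs : IsCompact s) (ht : IsCompact t) :
    IsCompact (convexJoin ℝ s t) := by
  have himage : _root_.convexJoin ℝ s t =
      (fun p : ℝ × E × E => (1 - p.1) • p.2.1 + p.1 • p.2.2) '' (Set.Icc 0 1 ×ˢ s ×ˢ t) := by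
    ext x
    simp only [mem_convexJoin, segment_eq_image, Set.mem_image, Set.mem_prod, Prod.exists]
    constructor
    · rintro ⟨a, ha, b, hb, θ, hθ, rfl⟩
      exact ⟨θ, a, b, ⟨hθ, ha, hb⟩, rfl⟩
    · rintro ⟨θ, a, b, ⟨hθ, ha, hb⟩, rfl⟩
      exact ⟨a, ha, b, hb, θ, hθ, rfl⟩
  rw [himage]
  exact (isCompact_Icc.prod (hs.prod ht)).image (by fun_prop)

variable [T2Space E] [LocallyConvexSpace ℝ E]

/-- **Milman's theorem**: if the closed convex hull of a compact set is compact, then its extreme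
points belong to the original set. -/
theorem IsCompact.extremePoints_closure_convexHull_subset {s : Set E} (hs : IsCompact s)
    (hK : IsCompact (closure (convexHull ℝ s))) :
    Set.extremePoints ℝ (closure (convexHull ℝ s)) ⊆ s := by
  intro x hx
  by_contra hxs
  set K := closure (convexHull ℝ s)
  let C : Set E → Set E := fun t => closure (convexHull ℝ (t ∩ s))
  have hCK : ∀ t, C t ⊆ K := fun t =>
    closure_mono (convexHull_mono Set.inter_subset_right)
  have hCcompact : ∀ t, IsCompact (C t) := fun t =>
    hK.of_isClosed_subset isClosed_closure (hCK t)
  have hCconvex : ∀ t, Convex ℝ (C t) := fun t => (convex_convexHull ℝ _).closure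
  have hsubC : ∀ t, t ∩ s ⊆ C t := fun t => (subset_convexHull ℝ _).trans subset_closure
  have hCmono : ∀ ⦃t u⦄, t ⊆ u → C t ⊆ C u := fun t u h =>
    closure_mono (convexHull_mono (Set.inter_subset_inter_left _ h))
  have hnotMem : x ∉ C s := by
    refine hs.induction_on (p := fun t => x ∉ C t) (by simp [C])
      (fun t u h hu hxt => hu (hCmono h hxt)) ?_ ?_
    · intro t u ht hu hxtu
      rcases (t ∩ s).eq_empty_or_nonempty with ht₀ | ht₀
      · exact hu (by simpa [C, Set.union_inter_distrib_right, ht₀] using hxtu)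
      rcases (u ∩ s).eq_empty_or_nonempty with hu₀ | hu₀
      · exact ht (by simpa [C, Set.union_inter_distrib_right, hu₀] using hxtu)
      have hsub : C (t ∪ u) ⊆ convexJoin ℝ (C t) (C u) := by
        refine closure_minimal (convexHull_min ?_ ((hCconvex t).convexJoin (hCconvex u)))
          ((hCcompact t).convexJoin (hCcompact u)).isClosed
        rw [Set.union_inter_distrib_right]
        exact Set.union_subset
          ((hsubC t).trans (subset_convexJoin_left (hu₀.mono (hsubC u))))
          ((hsubC u).trans (subset_convexJoin_right (ht₀.mono (hsubC t))))
      obtain ⟨a, ha, b, hb, hab⟩ := mem_convexJoin.1 (hsub hxtu)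
      rcases (mem_extremePoints_iff_forall_segment.1 hx).2 a (hCK t ha) b (hCK u hb) hab with h | h
      · exact ht (h ▸ ha)
      · exact hu (h ▸ hb)
    · intro z hz
      have hzx : z ≠ x := fun h => hxs (h ▸ hz)
      obtain ⟨l, hl⟩ := geometric_hahn_banach_point_point hzx
      obtain ⟨c, hzc, hcx⟩ := exists_between hl
      refine ⟨{w | l w < c}, mem_nhdsWithin_of_mem_nhds
        ((isOpen_lt l.continuous continuous_const).mem_nhds hzc), fun hxC => ?_⟩
      have hsub : C {w | l w < c} ⊆ {w | l w ≤ c} :=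
        closure_minimal (convexHull_min (fun w hw => Set.mem_ofPred_eq ▸ le_of_lt hw.1)
          (convex_halfSpace_le l.toLinearMap.isLinear c))
          (isClosed_le l.continuous continuous_const)
      exact absurd (hsub hxC) (not_le.2 hcx)
  exact hnotMem (by simpa [C] using hx.1)

end Milman

section WeakTopology

variable {V : Type*} [NormedAddCommGroup V] [InnerProductSpace ℝ V]

theorem locallyConvexSpace_weakSpace : LocallyConvexSpace ℝ (WeakSpace ℝ V) :=
  inferInstanceAs (LocallyConvexSpace ℝ (WeakBilin (topDualPairing ℝ V).flip))

variable [CompleteSpace V]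

theorem isCompact_weakSpace_of_isBounded_of_isClosed {S : Set (WeakSpace ℝ V)}
    (hb : Bornology.IsBounded (toWeakSpace ℝ V ⁻¹' S)) (hc : IsClosed S) : IsCompact S := by
  rw [← hc.closure_eq]
  refine NormedSpace.isCompact_closure_of_isBounded ℝ V S hb fun φ _ => ?_
  let ψ : StrongDual ℝ (StrongDual ℝ V) := WeakDual.toStrongDual φ
  let x : V := (InnerProductSpace.toDual ℝ V).symm
    (ψ.comp (InnerProductSpace.toDual ℝ V).toContinuousLinearEquiv.toContinuousLinearMap)
  refine ⟨toWeakSpace ℝ V x, ?_⟩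
  refine ContinuousLinearMap.ext fun f => ?_
  obtain ⟨v, rfl⟩ := (InnerProductSpace.toDual ℝ V).surjective f
  have h : ⟪x, v⟫_ℝ = ψ (InnerProductSpace.toDual ℝ V v) := by
    simp only [x, InnerProductSpace.toDual_symm_apply]
    rfl
  change ⟪v, x⟫_ℝ = ψ (InnerProductSpace.toDual ℝ V v)
  rw [← h, real_inner_comm]

end WeakTopology

section Biconjugate

variable {V : Type*} [NormedAddCommGroup V] [InnerProductSpace ℝ V] {g : V → EReal}

theorem legendre_le_coe_iff {y : V} {c : ℝ} :
    legendre g y ≤ (c : EReal) ↔ ∀ z, ((⟪z, y⟫_ℝ - c : ℝ) : EReal) ≤ g z := by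
  refine iSup_le_iff.trans (forall_congr' fun z => ?_)
  induction g z with
  | bot => simp [-EReal.coe_sub]
  | top => simp
  | coe a =>
    norm_cast
    exact sub_le_comm

theorem coe_le_legendre_legendre {y : V} {c : ℝ}
    (h : ∀ z, ((⟪z, y⟫_ℝ - c : ℝ) : EReal) ≤ g z) (x : V) :
    ((⟪x, y⟫_ℝ - c : ℝ) : EReal) ≤ legendre (legendre g) x := by
  rw [real_inner_comm, EReal.coe_sub]
  exact (EReal.sub_le_sub le_rfl (legendre_le_coe_iff.2 h)).trans
    (le_iSup (fun w => ((⟪w, x⟫_ℝ : ℝ) : EReal) - legendre g w) y)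

theorem legendre_legendre_le_coe_iff (hproper : ∃ x, g x ≠ ⊤) {x : V} {r : ℝ} :
    legendre (legendre g) x ≤ (r : EReal) ↔
      ∀ (y : V) (c : ℝ), (∀ z, ((⟪z, y⟫_ℝ - c : ℝ) : EReal) ≤ g z) → ⟪x, y⟫_ℝ - c ≤ r := by
  refine ⟨fun h y c hyc => EReal.coe_le_coe_iff.1 ((coe_le_legendre_legendre hyc x).trans h),
    fun h => iSup_le fun y => ?_⟩
  induction hy : legendre g y with
  | bot =>
    obtain ⟨z, hz⟩ := hproper
    refine absurd ((EReal.eq_top_iff_forall_lt _).2 fun a => ?_) hz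
    refine (EReal.coe_lt_coe_iff.2 (lt_add_one a)).trans_le ?_
    have hc : legendre g y ≤ ((⟪z, y⟫_ℝ - (a + 1) : ℝ) : EReal) := hy ▸ bot_le
    simpa only [sub_sub_cancel] using legendre_le_coe_iff.1 hc z
  | top => simp
  | coe c =>
    have := h y c (legendre_le_coe_iff.1 hy.le)
    rw [real_inner_comm] at this
    exact_mod_cast this

theorem legendre_legendre_le (hproper : ∃ x, g x ≠ ⊤) {x : V} (hx : g x ≠ ⊥) :
    legendre (legendre g) x ≤ g x := by
  induction hgx : g x with
  | bot => exact absurd hgx hx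
  | top => exact le_top
  | coe r =>
    refine (legendre_legendre_le_coe_iff hproper).2 fun y c hyc => ?_
    exact EReal.coe_le_coe_iff.1 (hgx ▸ hyc x)

theorem isClosed_legendre_legendre_le (hproper : ∃ x, g x ≠ ⊤) (r : ℝ) :
    IsClosed {x | legendre (legendre g) x ≤ (r : EReal)} := by
  simp only [legendre_legendre_le_coe_iff hproper, Set.ofPred_forall]
  exact isClosed_iInter fun y => isClosed_iInter fun c => isClosed_iInter fun _ =>
    isClosed_le (by fun_prop) continuous_const

theorem legendre_legendre_add_smul_le (hproper : ∃ x, g x ≠ ⊤) {x y : V} {r s a b : ℝ}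
    (hx : legendre (legendre g) x ≤ (r : EReal)) (hy : legendre (legendre g) y ≤ (s : EReal))
    (ha : 0 ≤ a) (hb : 0 ≤ b) (hab : a + b = 1) :
    legendre (legendre g) (a • x + b • y) ≤ ((a * r + b * s : ℝ) : EReal) := by
  rw [legendre_legendre_le_coe_iff hproper] at hx hy ⊢
  intro w c hwc
  have h₁ := mul_le_mul_of_nonneg_left (hx w c hwc) ha
  have h₂ := mul_le_mul_of_nonneg_left (hy w c hwc) hb
  rw [inner_add_left, real_inner_smul_left, real_inner_smul_left]
  linear_combination h₁ + h₂ + c * hab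

theorem convex_legendre_legendre_le (hproper : ∃ x, g x ≠ ⊤) (r : ℝ) :
    Convex ℝ {x | legendre (legendre g) x ≤ (r : EReal)} := by
  intro x hx y hy a b ha hb hab
  have h := legendre_legendre_add_smul_le hproper hx hy ha hb hab
  rwa [← add_mul, hab, one_mul] at h

/-- A biconjugate with a bounded sublevel set above its minimum grows at least linearly. -/
theorem exists_linear_growth_legendre_legendre (hproper : ∃ x, g x ≠ ⊤) {x : V} {m : ℝ}
    (hx : legendre (legendre g) x ≤ (m : EReal))
    (hm : ∀ z, (m : EReal) ≤ legendre (legendre g) z)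
    (hb : Bornology.IsBounded {z | legendre (legendre g) z ≤ ((m + 1 : ℝ) : EReal)}) :
    ∃ R : ℝ, 0 < R ∧ ∀ (z : V) (r : ℝ), legendre (legendre g) z ≤ (r : EReal) →
      ‖z - x‖ / R - 1 ≤ r - m := by
  obtain ⟨R, hR, hsub⟩ := hb.subset_ball_lt 0 x
  refine ⟨R, hR, fun z r hz => ?_⟩
  have hmr : m ≤ r := EReal.coe_le_coe_iff.1 ((hm z).trans hz)
  rcases lt_or_ge ‖z - x‖ R with hlt | hge
  · have := (div_lt_one hR).2 hlt
    linarith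
  have hd : 0 < ‖z - x‖ := hR.trans_le hge
  set t := R / ‖z - x‖ with ht
  have ht₀ : 0 < t := div_pos hR hd
  have ht₁ : t ≤ 1 := (div_le_one hd).2 hge
  have hw := legendre_legendre_add_smul_le hproper hx hz (sub_nonneg.2 ht₁) ht₀.le
    (sub_add_cancel 1 t)
  have hnorm : ‖(1 - t) • x + t • z - x‖ = R := by
    rw [show (1 - t) • x + t • z - x = t • (z - x) by module, norm_smul, Real.norm_of_nonneg ht₀.le,
      ht, div_mul_cancel₀ _ hd.ne']
  have hlt : m + 1 < (1 - t) * m + t * r := by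
    by_contra! hle
    have hmem := hsub (hw.trans (EReal.coe_le_coe_iff.2 hle))
    rw [mem_ball_iff_norm, hnorm] at hmem
    exact lt_irrefl _ hmem
  have h₁ : 1 / t < r - m := by
    rw [div_lt_iff₀ ht₀]
    linarith
  rw [ht, one_div_div] at h₁
  linarith

end Biconjugate

section Minimizers

variable {V : Type*} [NormedAddCommGroup V] [InnerProductSpace ℝ V] [CompleteSpace V]
  {g : V → EReal}

theorem isCompact_weakSpace_le (hwlsc : LowerSemicontinuous (α := WeakSpace ℝ V) g)
    (hnebot : ∀ x, g x ≠ ⊥) (hproper : ∃ x, g x ≠ ⊤) {r : ℝ}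
    (hb : Bornology.IsBounded {x : V | legendre (legendre g) x ≤ (r : EReal)}) :
    IsCompact (toWeakSpace ℝ V '' {x | g x ≤ (r : EReal)}) := by
  refine isCompact_weakSpace_of_isBounded_of_isClosed ?_ ?_
  · rw [Set.preimage_image_eq _ (toWeakSpace ℝ V).injective]
    exact hb.subset fun x hx => (legendre_legendre_le hproper (hnebot x)).trans hx
  · rw [LinearEquiv.image_eq_preimage_symm]
    exact hwlsc.isClosed_preimage (r : EReal)

/-- Minimizers of the biconjugate are in the closed convex hull of the minimizers. -/
theorem mem_closure_convexHull_of_legendre_legendre_le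
    (hwlsc : LowerSemicontinuous (α := WeakSpace ℝ V) g)
    (hnebot : ∀ x, g x ≠ ⊥) (hproper : ∃ x, g x ≠ ⊤) {m : ℝ}
    (hcoercive : ∀ r : ℝ, Bornology.IsBounded {x : V | legendre (legendre g) x ≤ (r : EReal)})
    (hm : ∀ z, (m : EReal) ≤ legendre (legendre g) z) {x : V}
    (hx : legendre (legendre g) x ≤ (m : EReal)) :
    x ∈ closure (convexHull ℝ {z | g z ≤ (m : EReal)}) := by
  by_contra hxC
  obtain ⟨l, s, hls, hsx⟩ := geometric_hahn_banach_closed_point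
    (convex_convexHull ℝ _).closure isClosed_closure hxC
  obtain ⟨y, rfl⟩ := (InnerProductSpace.toDual ℝ V).surjective l
  simp only [InnerProductSpace.toDual_apply_apply] at hls hsx
  have hle : ∀ z, legendre (legendre g) z ≤ g z := fun z =>
    legendre_legendre_le hproper (hnebot z)
  -- By weak compactness, the half-space contains a whole sublevel set above the minimum.
  obtain ⟨δ, hδ, hδs⟩ : ∃ δ : ℝ, 0 < δ ∧ ∀ z, g z ≤ ((m + δ : ℝ) : EReal) → ⟪y, z⟫_ℝ < s := by
    by_contra! hcon
    let e := toWeakSpace ℝ V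
    let F : ℕ → Set V := fun n => {z | g z ≤ ((m + 1 / (n + 1) : ℝ) : EReal) ∧ s ≤ ⟪y, z⟫_ℝ}
    have hclosed : IsClosed (e '' {z | s ≤ ⟪y, z⟫_ℝ}) := by
      rw [LinearEquiv.image_eq_preimage_symm]
      exact isClosed_le continuous_const
        (WeakBilin.eval_continuous (topDualPairing ℝ V).flip (InnerProductSpace.toDual ℝ V y))
    have hF : ∀ n, IsCompact (e '' F n) := fun n => by
      have : e '' F n = e '' {z | g z ≤ ((m + 1 / (n + 1) : ℝ) : EReal)} ∩
          e '' {z | s ≤ ⟪y, z⟫_ℝ} := by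
        rw [← Set.image_inter e.injective]
        rfl
      rw [this]
      exact (isCompact_weakSpace_le hwlsc hnebot hproper (hcoercive _)).inter_right hclosed
    have hne := IsCompact.nonempty_iInter_of_sequence_nonempty_isCompact_isClosed
      (fun n => e '' F n) (fun n => Set.image_mono fun z hz => ⟨hz.1.trans ?_, hz.2⟩)
      (fun n => ?_) (hF 0) (fun n => (hF n).isClosed)
    · obtain ⟨w, hw⟩ := hne
      obtain ⟨z, rfl⟩ := e.surjective w
      have hz : ∀ n, z ∈ F n := fun n => by
        obtain ⟨v, hv, h⟩ := Set.mem_iInter.1 hw n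
        exact e.injective h ▸ hv
      have hgz : g z ≤ (m : EReal) := by
        refine ge_of_tendsto' (x := (atTop : Filter ℕ))
          (f := fun n : ℕ => ((m + 1 / (n + 1) : ℝ) : EReal)) ?_ fun n => (hz n).1
        refine (continuous_coe_real_ereal.tendsto m).comp ?_
        simpa using (tendsto_one_div_add_atTop_nhds_zero_nat (𝕜 := ℝ)).const_add m
      exact absurd (hls z (subset_closure (subset_convexHull ℝ _ hgz))) (not_lt.2 (hz 0).2)
    · refine EReal.coe_le_coe_iff.2 (add_le_add_right ?_ m)
      exact one_div_le_one_div_of_le (by positivity) (by push_cast; linarith)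
    · obtain ⟨z, hz⟩ := hcon (1 / (n + 1)) (by positivity)
      exact ⟨e z, z, hz, rfl⟩
  obtain ⟨R, hR, hgrowth⟩ := exists_linear_growth_legendre_legendre hproper hx hm (hcoercive _)
  -- A small multiple of the separating functional is a minorant exceeding the minimum at `x`.
  set A := ⟪y, x⟫_ℝ - s with hA
  have hApos : 0 < A := sub_pos.2 hsx
  obtain ⟨ε, hε, hεbound⟩ : ∃ ε : ℝ, 0 < ε ∧ ∀ d q : ℝ, 0 ≤ d → δ ≤ q → d / R - 1 ≤ q →
      ε * (‖y‖ * d + A) ≤ q := by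
    set B := ‖y‖ * R + A with hB
    have hBpos : 0 < B := by positivity
    refine ⟨δ / ((1 + δ) * B), by positivity, fun d q hd hδq hdq => ?_⟩
    have hdR : d ≤ R * (1 + q) := by
      rw [← div_le_iff₀' hR]
      linarith
    have h₁ : ‖y‖ * d + A ≤ (1 + q) * B := by
      have h₂ := mul_le_mul_of_nonneg_left hdR (norm_nonneg y)
      have h₃ : 0 ≤ q * A := mul_nonneg (hδ.le.trans hδq) hApos.le
      rw [hB]
      linarith
    rw [div_mul_eq_mul_div, div_le_iff₀ (by positivity)]
    have h₂ := mul_le_mul_of_nonneg_left h₁ hδ.le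
    have h₃ := mul_nonneg (sub_nonneg.2 hδq) hBpos.le
    linarith
  have hminorant : ∀ z, ((⟪z, ε • y⟫_ℝ - (ε * s - m) : ℝ) : EReal) ≤ g z := by
    intro z
    rw [real_inner_smul_right, real_inner_comm]
    induction hgz : g z with
    | bot => exact absurd hgz (hnebot z)
    | top => exact le_top
    | coe r =>
      refine EReal.coe_le_coe_iff.2 ?_
      have hzr : legendre (legendre g) z ≤ (r : EReal) := hgz ▸ hle z
      have hmr : m ≤ r := EReal.coe_le_coe_iff.1 ((hm z).trans hzr)
      rcases lt_or_ge ⟪y, z⟫_ℝ s with hlt | hge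
      · nlinarith
      have hδr : δ ≤ r - m := by
        by_contra! hlt
        refine absurd (hδs z ?_) (not_lt.2 hge)
        rw [hgz]
        exact EReal.coe_le_coe_iff.2 (by linarith)
      have h₁ := hεbound ‖z - x‖ (r - m) (norm_nonneg _) hδr (hgrowth z r hzr)
      have h₂ := real_inner_le_norm y (z - x)
      rw [inner_sub_right] at h₂
      have h₃ := mul_le_mul_of_nonneg_left (show ⟪y, z⟫_ℝ - s ≤ ‖y‖ * ‖z - x‖ + A by
        rw [hA]; linarith) hε.le
      linarith
  have hval := (legendre_legendre_le_coe_iff hproper).1 hx _ _ hminorant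
  rw [real_inner_smul_right, real_inner_comm] at hval
  have := mul_pos hε hApos
  rw [hA] at this
  linarith

end Minimizers

/-- Let `g` be weakly l.s.c., not identically `+∞`, never `-∞`, with proper
coercive biconjugate `g**`. Let `G`, `G**` be the sets of global minimizers of `g`, `g**`.
Then `G**` is closed, bounded and convex, `G ⊆ G**`, every extreme point of `G**` lies in `G`,
and the closed convex hull of the extreme points of `G**` equals `G**`. -/
theorem statement12 {V : Type*} [NormedAddCommGroup V] [InnerProductSpace ℝ V]
    [CompleteSpace V] [TopologicalSpace.SeparableSpace V]
    (g : V → EReal)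
    (hwlsc : LowerSemicontinuous (α := WeakSpace ℝ V) g)
    (hnebot : ∀ x, g x ≠ ⊥) (hproper : ∃ x, g x ≠ ⊤)
    (hss_nebot : ∀ x, legendre (legendre g) x ≠ ⊥)
    (hss_proper : ∃ x, legendre (legendre g) x ≠ ⊤)
    (hcoercive : ∀ r : ℝ, Bornology.IsBounded {x : V | legendre (legendre g) x ≤ (r : EReal)}) :
    IsClosed {x : V | ∀ y, legendre (legendre g) x ≤ legendre (legendre g) y} ∧
    Bornology.IsBounded {x : V | ∀ y, legendre (legendre g) x ≤ legendre (legendre g) y} ∧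
    Convex ℝ {x : V | ∀ y, legendre (legendre g) x ≤ legendre (legendre g) y} ∧
    {x : V | ∀ y, g x ≤ g y} ⊆
      {x : V | ∀ y, legendre (legendre g) x ≤ legendre (legendre g) y} ∧
    Set.extremePoints ℝ {x : V | ∀ y, legendre (legendre g) x ≤ legendre (legendre g) y} ⊆
      {x : V | ∀ y, g x ≤ g y} ∧
    closure (convexHull ℝ (Set.extremePoints ℝ
        {x : V | ∀ y, legendre (legendre g) x ≤ legendre (legendre g) y})) =
      {x : V | ∀ y, legendre (legendre g) x ≤ legendre (legendre g) y} := by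
  set Gss : Set V := {x : V | ∀ y, legendre (legendre g) x ≤ legendre (legendre g) y}
  have hG : {x : V | ∀ y, g x ≤ g y} ⊆ Gss := by
    intro x hx y
    obtain ⟨z, hz⟩ := hproper
    have hxtop : g x ≠ ⊤ := ((hx z).trans_lt (lt_top_iff_ne_top.2 hz)).ne
    refine (legendre_legendre_le ⟨z, hz⟩ (hnebot x)).trans ?_
    have hcoe := EReal.coe_toReal hxtop (hnebot x)
    have h := coe_le_legendre_legendre (g := g) (y := 0) (c := -(g x).toReal)
      (fun w => by simpa [hcoe] using hx w) y
    simpa [hcoe] using h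
  rcases Gss.eq_empty_or_nonempty with hempty | ⟨x₀, hx₀⟩
  · rw [hempty] at hG ⊢
    simpa [convex_empty] using hG
  obtain ⟨z, hz⟩ := hss_proper
  have hx₀top : legendre (legendre g) x₀ ≠ ⊤ :=
    ((hx₀ z).trans_lt (lt_top_iff_ne_top.2 hz)).ne
  obtain ⟨m, hm⟩ : ∃ m : ℝ, (m : EReal) = legendre (legendre g) x₀ :=
    ⟨_, EReal.coe_toReal hx₀top (hss_nebot x₀)⟩
  have hmin : ∀ y, (m : EReal) ≤ legendre (legendre g) y := fun y => hm ▸ hx₀ y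
  have hGss_eq : Gss = {x | legendre (legendre g) x ≤ (m : EReal)} :=
    Set.ext fun x => ⟨fun hx => hm ▸ hx x₀, fun hx y => le_trans hx (hmin y)⟩
  have hclosed : IsClosed Gss := hGss_eq ▸ isClosed_legendre_legendre_le hproper m
  have hbdd : Bornology.IsBounded Gss := hGss_eq ▸ hcoercive m
  have hconv : Convex ℝ Gss := hGss_eq ▸ convex_legendre_legendre_le hproper m
  have hhull : closure (convexHull ℝ {z | g z ≤ (m : EReal)}) = Gss := by
    refine (closure_minimal (convexHull_min (fun z hz => ?_) hconv) hclosed).antisymm fun x hx => ?_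
    · rw [hGss_eq]
      exact (legendre_legendre_le hproper (hnebot z)).trans hz
    · rw [hGss_eq] at hx
      exact mem_closure_convexHull_of_legendre_legendre_le hwlsc hnebot hproper hcoercive hmin hx
  have hcompact : IsCompact (toWeakSpace ℝ V '' Gss) := by
    refine isCompact_weakSpace_of_isBounded_of_isClosed ?_ ?_
    · rwa [Set.preimage_image_eq _ (toWeakSpace ℝ V).injective]
    · rw [← hclosed.closure_eq, hconv.toWeakSpace_closure ℝ]
      exact isClosed_closure
  have hclosure : ∀ s : Set V, toWeakSpace ℝ V '' closure (convexHull ℝ s) =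
      closure (convexHull ℝ (toWeakSpace ℝ V '' s)) := fun s => by
    rw [(convex_convexHull ℝ s).toWeakSpace_closure ℝ]
    exact congrArg closure (LinearMap.image_convexHull (toWeakSpace ℝ V).toLinearMap s)
  have := locallyConvexSpace_weakSpace (V := V)
  have hextreme : toWeakSpace ℝ V '' Set.extremePoints ℝ Gss =
      Set.extremePoints ℝ (toWeakSpace ℝ V '' Gss) := image_extremePoints (toWeakSpace ℝ V) Gss
  refine ⟨hclosed, hbdd, hconv, hG, fun x hx y => ?_, ?_⟩
  · have hxw := hextreme ▸ Set.mem_image_of_mem (toWeakSpace ℝ V) hx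
    rw [← hhull, hclosure] at hxw
    obtain ⟨w, hw, hwx⟩ := (isCompact_weakSpace_le hwlsc hnebot hproper
      (hcoercive m)).extremePoints_closure_convexHull_subset
        (by rwa [← hclosure, hhull]) hxw
    rw [(toWeakSpace ℝ V).injective hwx] at hw
    exact le_trans hw ((hmin y).trans (legendre_legendre_le hproper (hnebot y)))
  · apply (toWeakSpace ℝ V).injective.image_injective
    rw [hclosure, hextreme]
    exact closure_convexHull_extremePoints hcompact
      (hconv.linear_image (toWeakSpace ℝ V).toLinearMap)
end
end

section
/- Let f : V → [0,∞] be a function on a separable real Hilbert space V, let c : V → [0,∞] be a lower semicontinuous convex function with dom(f) ∩ dom(c) ≠ ∅, let d ∈ V, and let 0 < γ < 1. Then the function F(x) := S_γ²(f)(x) + ½‖x−d‖² + c(x) is strongly convex and supercoercive, and hence has a unique global minimizer x̂. Moreover, if S_γ²(f)(x̂) = f(x̂), then x̂ is a global minimizer of the function x ↦ f(x) + ½‖x−d‖² + c(x). -/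
open scoped InnerProductSpace RealInnerProductSpace ENNReal Topology
open Filter

noncomputable section

/-- The S-transform `S_γ(f)(y) = sup_x ( -f(x) - (γ/2)‖x-y‖² )` for
extended-real-valued functions on a real inner product space. -/
def SgammaE {V : Type*} [NormedAddCommGroup V] [InnerProductSpace ℝ V]
    (γ : ℝ) (f : V → EReal) (y : V) : EReal :=
  ⨆ x : V, (-(f x) - (((γ / 2) * ‖x - y‖ ^ 2 : ℝ) : EReal))

/-- The S-transform of a `[0,∞]`-valued function. -/
def Sgamma {V : Type*} [NormedAddCommGroup V] [InnerProductSpace ℝ V]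
    (γ : ℝ) (f : V → ℝ≥0∞) (y : V) : EReal :=
  SgammaE γ (fun x => (f x : EReal)) y

/-- The twice iterated S-transform `S_γ²(f) = S_γ(S_γ(f))`. -/
def Sgamma2 {V : Type*} [NormedAddCommGroup V] [InnerProductSpace ℝ V]
    (γ : ℝ) (f : V → ℝ≥0∞) : V → EReal :=
  SgammaE γ (Sgamma γ f)

/-- Convexity for extended-real-valued functions. -/
def EConvexOn {V : Type*} [NormedAddCommGroup V] [InnerProductSpace ℝ V]
    (h : V → EReal) : Prop :=
  ∀ x y : V, ∀ a b : ℝ, 0 ≤ a → 0 ≤ b → a + b = 1 →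
    h (a • x + b • y) ≤ (a : EReal) * h x + (b : EReal) * h y

/-- The objective `F(x) = S_γ²(f)(x) + ½‖x-d‖² + c(x)` of the convexified problem. -/
def convexifiedObjective {V : Type*} [NormedAddCommGroup V] [InnerProductSpace ℝ V]
    (γ : ℝ) (f c : V → ℝ≥0∞) (d : V) (x : V) : EReal :=
  Sgamma2 γ f x + ((1 / 2 * ‖x - d‖ ^ 2 : ℝ) : EReal) + (c x : EReal)

section SgammaTheory

variable {V : Type*} [NormedAddCommGroup V] [InnerProductSpace ℝ V]

/-- The squared distance to a point along a segment. -/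
theorem norm_combo_sub_sq (x y z : V) {a b : ℝ} (hab : a + b = 1) :
    ‖a • x + b • y - z‖ ^ 2 = a * ‖x - z‖ ^ 2 + b * ‖y - z‖ ^ 2 - a * b * ‖x - y‖ ^ 2 := by
  have hz : a • x + b • y - z = a • (x - z) + b • (y - z) := by
    have : z = (a + b) • z := by rw [hab, one_smul]
    nth_rewrite 1 [this]
    module
  have hxy : x - y = (x - z) - (y - z) := by abel
  rw [hz, hxy, norm_add_sq_real, norm_sub_sq_real (x - z), norm_smul, norm_smul, inner_smul_left,
    inner_smul_right, mul_pow, mul_pow, Real.norm_eq_abs, Real.norm_eq_abs, sq_abs, sq_abs]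
  obtain rfl : b = 1 - a := by linarith
  simp only [conj_trivial]
  ring

/-- A uniformly midpoint convex, lower semicontinuous, nonnegative, proper function on a Hilbert
space has a unique minimizer. -/
theorem existsUnique_minimizer_of_midpoint [CompleteSpace V] {F : V → EReal} {κ : ℝ} (hκ : 0 < κ)
    (hF0 : ∀ x, 0 ≤ F x) (hlsc : LowerSemicontinuous F) (hfin : ∃ x, F x ≠ ⊤)
    (hmid : ∀ x y : V, ∀ s t : ℝ, F x = s → F y = t →
      F ((1 / 2 : ℝ) • x + (1 / 2 : ℝ) • y) ≤ (((s + t) / 2 - κ * ‖x - y‖ ^ 2 : ℝ) : EReal)) :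
    ∃! x, ∀ y, F x ≤ F y := by
  obtain ⟨x₀, hx₀⟩ := hfin
  have hm0 : 0 ≤ ⨅ x, F x := le_iInf hF0
  have hmtop : (⨅ x, F x) ≠ ⊤ := ne_top_of_le_ne_top hx₀ (iInf_le _ _)
  obtain ⟨m, hm⟩ : ∃ m : ℝ, (⨅ x, F x) = m := by
    lift (⨅ x, F x) to ℝ using ⟨hmtop, (EReal.bot_lt_zero.trans_le hm0).ne'⟩ with m
    exact ⟨m, rfl⟩
  have hmle : ∀ x, (m : EReal) ≤ F x := fun x => hm ▸ iInf_le F x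
  have hdist : ∀ x y : V, ∀ ε : ℝ, F x ≤ ((m + ε : ℝ) : EReal) → F y ≤ ((m + ε : ℝ) : EReal) →
      κ * ‖x - y‖ ^ 2 ≤ ε := by
    intro x y ε hx hy
    have real_of_le : ∀ w, F w ≤ ((m + ε : ℝ) : EReal) → ∃ s : ℝ, F w = s := by
      intro w hw
      exact ⟨(F w).toReal, (EReal.coe_toReal (ne_top_of_le_ne_top (EReal.coe_ne_top _) hw)
        (EReal.bot_lt_zero.trans_le (hF0 w)).ne').symm⟩
    obtain ⟨s, hs⟩ := real_of_le x hx
    obtain ⟨t, ht⟩ := real_of_le y hy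
    rw [hs, EReal.coe_le_coe_iff] at hx
    rw [ht, EReal.coe_le_coe_iff] at hy
    have := EReal.coe_le_coe_iff.1 ((hmle _).trans (hmid x y s t hs ht))
    linarith
  have hseq : ∀ n : ℕ, ∃ x, F x ≤ ((m + 1 / ((n : ℝ) + 1) : ℝ) : EReal) := by
    intro n
    have : (⨅ x, F x) < ((m + 1 / ((n : ℝ) + 1) : ℝ) : EReal) := by
      rw [hm, EReal.coe_lt_coe_iff]
      linarith [Nat.one_div_pos_of_nat (α := ℝ) (n := n)]
    obtain ⟨x, hx⟩ := iInf_lt_iff.1 this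
    exact ⟨x, hx.le⟩
  choose u hu using hseq
  have hcauchy : CauchySeq u := by
    rw [Metric.cauchySeq_iff']
    intro ε hε
    obtain ⟨N, hN⟩ := exists_nat_one_div_lt (mul_pos hκ (pow_pos hε 2))
    refine ⟨N, fun n hn => ?_⟩
    have hle : F (u n) ≤ ((m + 1 / ((N : ℝ) + 1) : ℝ) : EReal) :=
      (hu n).trans (EReal.coe_le_coe_iff.2 (by
        linarith [Nat.one_div_le_one_div (α := ℝ) hn]))
    have h := (hdist (u n) (u N) _ hle (hu N)).trans_lt hN
    rw [dist_eq_norm]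
    exact lt_of_pow_lt_pow_left₀ 2 hε.le (lt_of_mul_lt_mul_left h hκ.le)
  obtain ⟨x, hx⟩ := cauchySeq_tendsto_of_complete hcauchy
  have hxm : F x ≤ m := by
    refine le_of_forall_lt fun q hq => ?_
    obtain ⟨q', hqq', hq'⟩ := exists_between hq
    have hev := hx.eventually (hlsc x q' hq')
    have hlim : Tendsto (fun n : ℕ => ((m + 1 / ((n : ℝ) + 1) : ℝ) : EReal)) atTop
        (𝓝 (m : EReal)) := by
      refine (continuous_coe_real_ereal.tendsto m).comp ?_
      simpa using (tendsto_one_div_add_atTop_nhds_zero_nat (𝕜 := ℝ)).const_add m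
    exact hqq'.trans_le (ge_of_tendsto hlim (hev.mono fun n hn => hn.le.trans (hu n)))
  refine ⟨x, fun y => hxm.trans (hmle y), fun y hy => ?_⟩
  have h := hdist y x 0 (by simpa using (hy x).trans hxm) (by simpa using hxm)
  have hsq : ‖y - x‖ ^ 2 ≤ 0 := by
    by_contra! hpos
    exact (mul_pos hκ hpos).not_ge h
  exact sub_eq_zero.1 (norm_eq_zero.1 (pow_eq_zero_iff two_ne_zero |>.1
    (le_antisymm hsq (sq_nonneg _))))

/-- The S-transform of a proper nonnegative function is real and nonpositive. -/
theorem neg_Sgamma_eq_coe {γ : ℝ} (hγ : 0 ≤ γ) {f : V → ℝ≥0∞} (hf : ∃ x, f x ≠ ∞) (z : V) :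
    ∃ g : ℝ, 0 ≤ g ∧ -Sgamma γ f z = g := by
  obtain ⟨x, hx⟩ := hf
  have hle : Sgamma γ f z ≤ 0 := by
    refine iSup_le fun w => ?_
    have h1 : -(f w : EReal) ≤ 0 := by simpa using EReal.coe_ennreal_nonneg (f w)
    have h2 : (0 : EReal) ≤ ((γ / 2 * ‖w - z‖ ^ 2 : ℝ) : EReal) := by
      exact_mod_cast (by positivity : 0 ≤ γ / 2 * ‖w - z‖ ^ 2)
    simpa using EReal.sub_le_sub h1 h2
  have hge : Sgamma γ f z ≠ ⊥ := by
    have h := le_iSup (fun w => -(f w : EReal) - ((γ / 2 * ‖w - z‖ ^ 2 : ℝ) : EReal)) x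
    lift f x to NNReal using hx with p
    intro hbot
    change _ ≤ Sgamma γ f z at h
    rw [hbot, le_bot_iff] at h
    have : (((-(p : ℝ) - γ / 2 * ‖x - z‖ ^ 2 : ℝ)) : EReal) = ⊥ := by
      rw [← h]; push_cast; rfl
    exact EReal.coe_ne_bot _ this
  have htop : Sgamma γ f z ≠ ⊤ := (hle.trans_lt EReal.zero_lt_top).ne
  lift Sgamma γ f z to ℝ using ⟨htop, hge⟩ with s
  exact ⟨-s, by simpa using hle, by simp⟩

/-- The iterated S-transform is a supremum of real-valued paraboloids. -/
theorem exists_Sgamma2_eq_iSup {γ : ℝ} (hγ : 0 ≤ γ) {f : V → ℝ≥0∞} (hf : ∃ x, f x ≠ ∞) :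
    ∃ g : V → ℝ, (∀ z, 0 ≤ g z) ∧ (∀ z, -Sgamma γ f z = g z) ∧
      ∀ x, Sgamma2 γ f x = ⨆ z, ((g z - γ / 2 * ‖z - x‖ ^ 2 : ℝ) : EReal) := by
  choose g hg0 hg using neg_Sgamma_eq_coe hγ hf
  refine ⟨g, hg0, hg, fun x => ?_⟩
  simp only [Sgamma2, SgammaE, hg, EReal.coe_sub]

theorem Sgamma2_nonneg {γ : ℝ} (hγ : 0 ≤ γ) {f : V → ℝ≥0∞} (hf : ∃ x, f x ≠ ∞) (x : V) :
    0 ≤ Sgamma2 γ f x := by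
  obtain ⟨g, hg0, -, hg⟩ := exists_Sgamma2_eq_iSup hγ hf
  rw [hg]
  refine le_iSup_of_le x ?_
  simpa using hg0 x

theorem Sgamma2_le {γ : ℝ} (hγ : 0 ≤ γ) {f : V → ℝ≥0∞} (hf : ∃ x, f x ≠ ∞) (x : V) :
    Sgamma2 γ f x ≤ f x := by
  obtain ⟨g, -, hgS, hg⟩ := exists_Sgamma2_eq_iSup hγ hf
  rw [hg]
  refine iSup_le fun z => ?_
  have h := le_iSup (fun w => -(f w : EReal) - ((γ / 2 * ‖w - z‖ ^ 2 : ℝ) : EReal)) x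
  change _ ≤ Sgamma γ f z at h
  have hS : Sgamma γ f z = ((-g z : ℝ) : EReal) := by
    rw [EReal.coe_neg, ← hgS, neg_neg]
  rw [hS] at h
  cases hfx : f x with
  | top => simp
  | coe p =>
    rw [hfx] at h
    have h' : ((-(p : ℝ) - γ / 2 * ‖x - z‖ ^ 2 : ℝ) : EReal) ≤ ((-g z : ℝ) : EReal) := h
    have h'' := EReal.coe_le_coe_iff.1 h'
    have : g z - γ / 2 * ‖z - x‖ ^ 2 ≤ (p : ℝ) := by
      rw [norm_sub_rev z x]; linarith
    exact EReal.coe_le_coe_iff.2 this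

theorem lowerSemicontinuous_Sgamma2 {γ : ℝ} (hγ : 0 ≤ γ) {f : V → ℝ≥0∞} (hf : ∃ x, f x ≠ ∞) :
    LowerSemicontinuous (Sgamma2 γ f) := by
  obtain ⟨g, -, -, hg⟩ := exists_Sgamma2_eq_iSup hγ hf
  rw [funext hg]
  refine lowerSemicontinuous_iSup fun z => Continuous.lowerSemicontinuous ?_
  exact continuous_coe_real_ereal.comp (by fun_prop)

/-- The iterated S-transform is convex up to the quadratic `γ/2 ‖x‖²`. -/
theorem Sgamma2_combo_le {γ : ℝ} (hγ : 0 ≤ γ) {f : V → ℝ≥0∞} (hf : ∃ x, f x ≠ ∞) {x y : V}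
    {s t a b : ℝ} (hx : Sgamma2 γ f x ≤ s) (hy : Sgamma2 γ f y ≤ t) (ha : 0 ≤ a) (hb : 0 ≤ b)
    (hab : a + b = 1) :
    Sgamma2 γ f (a • x + b • y) ≤ ((a * s + b * t + a * b * (γ / 2) * ‖x - y‖ ^ 2 : ℝ) : EReal) := by
  obtain ⟨g, -, -, hg⟩ := exists_Sgamma2_eq_iSup hγ hf
  rw [hg, iSup_le_iff] at *
  intro z
  have h1 := mul_le_mul_of_nonneg_left (EReal.coe_le_coe_iff.1 (hx z)) ha
  have h2 := mul_le_mul_of_nonneg_left (EReal.coe_le_coe_iff.1 (hy z)) hb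
  rw [EReal.coe_le_coe_iff, norm_sub_rev, norm_combo_sub_sq x y z hab]
  rw [norm_sub_rev] at h1 h2
  obtain rfl : b = 1 - a := by linarith
  linarith

section Objective

variable {γ : ℝ} {f c : V → ℝ≥0∞} {d : V}

theorem half_norm_sq_le_convexifiedObjective (hγ : 0 ≤ γ) (hf : ∃ x, f x ≠ ∞) (x : V) :
    ((1 / 2 * ‖x - d‖ ^ 2 : ℝ) : EReal) ≤ convexifiedObjective γ f c d x := by
  have h := add_le_add (add_le_add_left (Sgamma2_nonneg hγ hf x)
    ((1 / 2 * ‖x - d‖ ^ 2 : ℝ) : EReal)) (EReal.coe_ennreal_nonneg (c x))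
  rwa [zero_add, add_zero] at h

theorem convexifiedObjective_nonneg (hγ : 0 ≤ γ) (hf : ∃ x, f x ≠ ∞) (x : V) :
    0 ≤ convexifiedObjective γ f c d x :=
  le_trans (by exact_mod_cast (by positivity : 0 ≤ 1 / 2 * ‖x - d‖ ^ 2))
    (half_norm_sq_le_convexifiedObjective hγ hf x)

theorem convexifiedObjective_le (hγ : 0 ≤ γ) (hf : ∃ x, f x ≠ ∞) (x : V) :
    convexifiedObjective γ f c d x ≤
      (f x : EReal) + ((1 / 2 * ‖x - d‖ ^ 2 : ℝ) : EReal) + (c x : EReal) :=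
  add_le_add_left (add_le_add_left (Sgamma2_le hγ hf x) _) _

theorem lowerSemicontinuous_convexifiedObjective (hγ : 0 ≤ γ) (hf : ∃ x, f x ≠ ∞)
    (hc : LowerSemicontinuous c) : LowerSemicontinuous (convexifiedObjective γ f c d) := by
  have hquad : LowerSemicontinuous fun x : V => ((1 / 2 * ‖x - d‖ ^ 2 : ℝ) : EReal) :=
    (continuous_coe_real_ereal.comp (by fun_prop)).lowerSemicontinuous
  have hcE : LowerSemicontinuous fun x => (c x : EReal) :=
    continuous_coe_ennreal_ereal.comp_lowerSemicontinuous hc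
      fun _ _ h => EReal.coe_ennreal_le_coe_ennreal_iff.2 h
  have hsum := (lowerSemicontinuous_Sgamma2 hγ hf).add' hquad fun x =>
    EReal.continuousAt_add (.inr (EReal.coe_ne_bot _)) (.inr (EReal.coe_ne_top _))
  refine hsum.add' hcE fun x => EReal.continuousAt_add (.inr (EReal.coe_ennreal_ne_bot _)) (.inl ?_)
  have h0 : (0 : EReal) ≤ ((1 / 2 * ‖x - d‖ ^ 2 : ℝ) : EReal) := by
    exact_mod_cast (by positivity : 0 ≤ 1 / 2 * ‖x - d‖ ^ 2)
  exact (EReal.bot_lt_zero.trans_le (add_nonneg (Sgamma2_nonneg hγ hf x) h0)).ne'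

/-- A real value of the objective splits into real values of its summands. -/
theorem exists_real_parts_of_convexifiedObjective_eq (hγ : 0 ≤ γ) (hf : ∃ x, f x ≠ ∞) {x : V}
    {s : ℝ} (hs : convexifiedObjective γ f c d x = s) :
    ∃ u v : ℝ, Sgamma2 γ f x = u ∧ (c x : EReal) = v ∧ s = u + 1 / 2 * ‖x - d‖ ^ 2 + v := by
  unfold convexifiedObjective at hs
  have h0 := Sgamma2_nonneg hγ hf x
  have hc0 := EReal.coe_ennreal_nonneg (c x)
  generalize Sgamma2 γ f x = u at *
  generalize (c x : EReal) = v at *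
  induction u with
  | bot => simp at h0
  | top =>
    rw [EReal.top_add_coe, EReal.top_add_of_ne_bot (EReal.bot_lt_zero.trans_le hc0).ne'] at hs
    exact absurd hs.symm (EReal.coe_ne_top _)
  | coe u =>
    induction v with
    | bot => simp at hc0
    | top =>
      rw [← EReal.coe_add, EReal.coe_add_top] at hs
      exact absurd hs.symm (EReal.coe_ne_top _)
    | coe v => exact ⟨u, v, rfl, rfl, by exact_mod_cast hs.symm⟩

/-- Quantitative strong convexity of the objective. -/
theorem convexifiedObjective_combo_le (hγ : 0 ≤ γ) (hf : ∃ x, f x ≠ ∞)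
    (hc : EConvexOn (fun x => (c x : EReal))) {x y : V} {s t a b : ℝ}
    (hs : convexifiedObjective γ f c d x = s) (ht : convexifiedObjective γ f c d y = t)
    (ha : 0 ≤ a) (hb : 0 ≤ b) (hab : a + b = 1) :
    convexifiedObjective γ f c d (a • x + b • y) ≤
      ((a * s + b * t - a * b * ((1 - γ) / 2) * ‖x - y‖ ^ 2 : ℝ) : EReal) := by
  obtain ⟨u, v, hu, hv, rfl⟩ := exists_real_parts_of_convexifiedObjective_eq hγ hf hs
  obtain ⟨u', v', hu', hv', rfl⟩ := exists_real_parts_of_convexifiedObjective_eq hγ hf ht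
  have hS := Sgamma2_combo_le hγ hf hu.le hu'.le ha hb hab
  have hcc := hc x y a b ha hb hab
  simp only [hv, hv'] at hcc
  unfold convexifiedObjective
  refine (add_le_add (add_le_add_left hS _) hcc).trans ?_
  norm_cast
  rw [norm_combo_sub_sq x y d hab]
  linarith

theorem eConvexOn_convexifiedObjective_sub (hγ : 0 ≤ γ) (hf : ∃ x, f x ≠ ∞)
    (hc : EConvexOn (fun x => (c x : EReal))) :
    EConvexOn (fun x =>
      convexifiedObjective γ f c d x - (((1 - γ) / 2 * ‖x‖ ^ 2 : ℝ) : EReal)) := by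
  intro x y a b ha hb hab
  rcases ha.eq_or_lt with rfl | ha'
  · obtain rfl : b = 1 := by linarith
    simp
  rcases hb.eq_or_lt with rfl | hb'
  · obtain rfl : a = 1 := by linarith
    simp
  dsimp only
  have hx0 := convexifiedObjective_nonneg (c := c) (d := d) hγ hf x
  have hy0 := convexifiedObjective_nonneg (c := c) (d := d) hγ hf y
  induction hs : convexifiedObjective γ f c d x with
  | bot => simp [hs] at hx0
  | top =>
    rw [EReal.top_sub_coe, EReal.coe_mul_top_of_pos ha', EReal.top_add_of_ne_bot]
    · exact le_top
    · induction ht : convexifiedObjective γ f c d y with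
      | bot => simp [ht] at hy0
      | top => simp only [EReal.top_sub_coe, EReal.coe_mul_top_of_pos hb', ne_eq, top_ne_bot,
          not_false_eq_true]
      | coe t => exact_mod_cast EReal.coe_ne_bot _
  | coe s =>
    induction ht : convexifiedObjective γ f c d y with
    | bot => simp [ht] at hy0
    | top =>
      rw [EReal.top_sub_coe, EReal.coe_mul_top_of_pos hb', EReal.add_top_of_ne_bot]
      · exact le_top
      · exact_mod_cast EReal.coe_ne_bot _
    | coe t =>
      refine (EReal.sub_le_sub (convexifiedObjective_combo_le hγ hf hc hs ht ha hb hab)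
        le_rfl).trans ?_
      have hn := norm_combo_sub_sq x y 0 hab
      simp only [sub_zero] at hn
      norm_cast
      rw [hn]
      linarith

theorem convexifiedObjective_supercoercive (hγ : 0 ≤ γ) (hf : ∃ x, f x ≠ ∞) (r : ℝ) :
    ∀ᶠ x in Bornology.cobounded V,
      ((r * ‖x‖ : ℝ) : EReal) ≤ convexifiedObjective γ f c d x := by
  filter_upwards [tendsto_norm_cobounded_atTop.eventually_ge_atTop (2 * ‖d‖ + 8 * |r|)] with x hx
  refine le_trans (EReal.coe_le_coe_iff.2 ?_) (half_norm_sq_le_convexifiedObjective hγ hf x)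
  have h1 := norm_sub_norm_le x d
  have h2 := norm_nonneg d
  have h3 := le_abs_self r
  have h4 := abs_nonneg r
  have h5 : ‖x‖ / 2 ≤ ‖x - d‖ := by linarith
  have h6 : (‖x‖ / 2) ^ 2 ≤ ‖x - d‖ ^ 2 := pow_le_pow_left₀ (by positivity) h5 2
  nlinarith [norm_nonneg x]

theorem existsUnique_minimizer_convexifiedObjective [CompleteSpace V] (hγ : 0 ≤ γ) (hγ1 : γ < 1)
    (hdom : ∃ x, f x ≠ ∞ ∧ c x ≠ ∞) (hc_lsc : LowerSemicontinuous c)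
    (hc : EConvexOn (fun x => (c x : EReal))) :
    ∃! x : V, ∀ y : V, convexifiedObjective γ f c d x ≤ convexifiedObjective γ f c d y := by
  have hf : ∃ x, f x ≠ ∞ := hdom.imp fun _ h => h.1
  refine existsUnique_minimizer_of_midpoint (κ := (1 - γ) / 8) (by linarith)
    (convexifiedObjective_nonneg hγ hf) (lowerSemicontinuous_convexifiedObjective hγ hf hc_lsc)
    ?_ fun x y s t hs ht => ?_
  · obtain ⟨x, hfx, hcx⟩ := hdom
    refine ⟨x, ne_top_of_le_ne_top ?_ (convexifiedObjective_le hγ hf x)⟩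
    lift f x to NNReal using hfx with p
    lift c x to NNReal using hcx with q
    exact EReal.coe_ne_top ((p : ℝ) + 1 / 2 * ‖x - d‖ ^ 2 + q)
  · refine (convexifiedObjective_combo_le hγ hf hc hs ht (by norm_num) (by norm_num)
      (by norm_num)).trans (EReal.coe_le_coe_iff.2 ?_)
    linarith

end Objective

end SgammaTheory

/-- For `0 < γ < 1`, `c` l.s.c. convex with `dom f ∩ dom c ≠ ∅`, the function
`F(x) = S_γ²(f)(x) + ½‖x-d‖² + c(x)` is strongly convex and supercoercive, hence has a unique
global minimizer `x̂`; and if `S_γ²(f)(x̂) = f(x̂)` then `x̂` minimizes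
`x ↦ f(x) + ½‖x-d‖² + c(x)`. -/
theorem statement13 {V : Type*} [NormedAddCommGroup V] [InnerProductSpace ℝ V]
    [CompleteSpace V] [TopologicalSpace.SeparableSpace V]
    (f c : V → ℝ≥0∞)
    (hc_lsc : LowerSemicontinuous c)
    (hc_conv : EConvexOn (fun x => (c x : EReal)))
    (hdom : ∃ x, f x ≠ ∞ ∧ c x ≠ ∞)
    (d : V) (γ : ℝ) (hγ0 : 0 < γ) (hγ1 : γ < 1) :
    (∃ β : ℝ, 0 < β ∧ EConvexOn (fun x =>
        convexifiedObjective γ f c d x - ((β / 2 * ‖x‖ ^ 2 : ℝ) : EReal))) ∧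
    (∀ r : ℝ, ∀ᶠ x in Bornology.cobounded V,
        ((r * ‖x‖ : ℝ) : EReal) ≤ convexifiedObjective γ f c d x) ∧
    (∃! xhat : V, ∀ y : V, convexifiedObjective γ f c d xhat ≤ convexifiedObjective γ f c d y) ∧
    (∀ xhat : V,
      (∀ y : V, convexifiedObjective γ f c d xhat ≤ convexifiedObjective γ f c d y) →
      Sgamma2 γ f xhat = (f xhat : EReal) →
      ∀ y : V,
        (f xhat : EReal) + ((1 / 2 * ‖xhat - d‖ ^ 2 : ℝ) : EReal) + (c xhat : EReal) ≤
          (f y : EReal) + ((1 / 2 * ‖y - d‖ ^ 2 : ℝ) : EReal) + (c y : EReal)) := by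
  have hf : ∃ x, f x ≠ ∞ := hdom.imp fun _ h => h.1
  refine ⟨⟨1 - γ, by linarith, eConvexOn_convexifiedObjective_sub hγ0.le hf hc_conv⟩,
    convexifiedObjective_supercoercive hγ0.le hf,
    existsUnique_minimizer_convexifiedObjective hγ0.le hγ1 hdom hc_lsc hc_conv,
    fun xhat hmin heq y => ?_⟩
  rw [← heq]
  exact (hmin y).trans (convexifiedObjective_le hγ0.le hf y)
end
end

section
/- Let f : V → [0,∞] be a proper lower semicontinuous function on a separable real Hilbert space V, and let 0 < γ < ρ. For y ∈ V let z = prox_{((ρ−γ)/(ργ))·S_γ(f)}(y). Then prox_{S_γ²(f)/ρ}(y) = (ρy − γz)/(ρ−γ); in particular both proximal points exist and are unique. -/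
open scoped InnerProductSpace RealInnerProductSpace ENNReal Topology
open Filter

noncomputable section

/-- `x` is a proximal point of `g` at `y`, i.e. a minimizer of `w ↦ g(w) + ½‖w-y‖²`. -/
def IsProx {V : Type*} [NormedAddCommGroup V] [InnerProductSpace ℝ V]
    (g : V → EReal) (y x : V) : Prop :=
  ∀ w : V, g x + ((1 / 2 * ‖x - y‖ ^ 2 : ℝ) : EReal) ≤ g w + ((1 / 2 * ‖w - y‖ ^ 2 : ℝ) : EReal)

/-- A lower semicontinuous function that is bounded below and uniformly midpoint convex with a
quadratic modulus attains its minimum at exactly one point. -/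
theorem existsUnique_forall_le_of_midpoint_convex {V : Type*} [NormedAddCommGroup V]
    [InnerProductSpace ℝ V] [CompleteSpace V] {F : V → ℝ} {k : ℝ} (hk : 0 < k)
    (hbdd : BddBelow (Set.range F)) (hlsc : LowerSemicontinuous F)
    (hmid : ∀ a b : V,
      F ((1 / 2 : ℝ) • a + (1 / 2 : ℝ) • b) ≤ (F a + F b) / 2 - k * ‖a - b‖ ^ 2) :
    ∃! z, ∀ x, F z ≤ F x := by
  set m := sInf (Set.range F) with hm
  have hmle : ∀ x, m ≤ F x := fun x => csInf_le hbdd ⟨x, rfl⟩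
  have hseq : ∀ n : ℕ, ∃ x, F x < m + 1 / ((n : ℝ) + 1) := by
    intro n
    have hpos : (0 : ℝ) < 1 / ((n : ℝ) + 1) := by positivity
    obtain ⟨_, ⟨x, rfl⟩, hx⟩ :=
      exists_lt_of_csInf_lt (Set.range_nonempty F) (show sInf (Set.range F) < m + _ by linarith)
    exact ⟨x, hx⟩
  choose x hx using hseq
  have hcauchy : CauchySeq x := by
    rw [Metric.cauchySeq_iff']
    intro ε hε
    obtain ⟨N, hN⟩ := exists_nat_one_div_lt (show 0 < k * ε ^ 2 by positivity)
    refine ⟨N, fun n hn => ?_⟩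
    have hle : 1 / ((n : ℝ) + 1) ≤ 1 / ((N : ℝ) + 1) := by gcongr
    have hgap : k * ‖x n - x N‖ ^ 2 < k * ε ^ 2 := by
      linarith [hmid (x n) (x N), hmle ((1 / 2 : ℝ) • x n + (1 / 2 : ℝ) • x N), hx n, hx N]
    rw [dist_eq_norm]
    exact lt_of_pow_lt_pow_left₀ 2 hε.le (lt_of_mul_lt_mul_left hgap hk.le)
  obtain ⟨z, hz⟩ := cauchySeq_tendsto_of_complete hcauchy
  have hzm : F z ≤ m := by
    by_contra! h
    obtain ⟨r, hmr, hrz⟩ := exists_between h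
    obtain ⟨N, hN⟩ := exists_nat_one_div_lt (sub_pos.2 hmr)
    obtain ⟨n, hn, hNn⟩ :=
      ((hz.eventually (hlsc z r hrz)).and (eventually_ge_atTop N)).exists
    have hle : 1 / ((n : ℝ) + 1) ≤ 1 / ((N : ℝ) + 1) := by gcongr
    linarith [hx n]
  refine ⟨z, fun w => hzm.trans (hmle w), fun w hw => ?_⟩
  have hgap : k * ‖w - z‖ ^ 2 ≤ 0 := by
    linarith [hmid w z, hmle ((1 / 2 : ℝ) • w + (1 / 2 : ℝ) • z), hw z]
  have hsq : ‖w - z‖ ^ 2 = 0 := by nlinarith [sq_nonneg ‖w - z‖]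
  exact sub_eq_zero.1 (norm_eq_zero.1 (by simpa using hsq))

/-- The S-transform of a proper `[0,∞]`-valued function is real-valued, and is the least upper
bound of its real-valued defining family. -/
theorem exists_real_Sgamma {V : Type*} [NormedAddCommGroup V] [InnerProductSpace ℝ V]
    {f : V → ℝ≥0∞} (hproper : ∃ x, f x ≠ ∞) {γ : ℝ} (hγ : 0 < γ) :
    ∃ s : V → ℝ, (∀ x, Sgamma γ f x = s x) ∧
      (∀ x u, f u ≠ ∞ → -(f u).toReal - γ / 2 * ‖u - x‖ ^ 2 ≤ s x) ∧
      ∀ x r, (∀ u, f u ≠ ∞ → -(f u).toReal - γ / 2 * ‖u - x‖ ^ 2 ≤ r) → s x ≤ r := by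
  have hterm : ∀ x u, f u ≠ ∞ →
      -((f u : ℝ≥0∞) : EReal) - ((γ / 2 * ‖u - x‖ ^ 2 : ℝ) : EReal)
        = ((-(f u).toReal - γ / 2 * ‖u - x‖ ^ 2 : ℝ) : EReal) := by
    intro x u hu
    rw [← EReal.coe_ennreal_toReal hu]
    norm_cast
  have hge : ∀ x u, f u ≠ ∞ →
      ((-(f u).toReal - γ / 2 * ‖u - x‖ ^ 2 : ℝ) : EReal) ≤ Sgamma γ f x := by
    intro x u hu
    rw [← hterm x u hu]
    exact le_iSup (fun u => -((f u : ℝ≥0∞) : EReal) - ((γ / 2 * ‖u - x‖ ^ 2 : ℝ) : EReal)) u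
  have hle : ∀ x (r : ℝ), (∀ u, f u ≠ ∞ → -(f u).toReal - γ / 2 * ‖u - x‖ ^ 2 ≤ r) →
      Sgamma γ f x ≤ r := by
    intro x r h
    refine iSup_le fun u => ?_
    by_cases hu : f u = ∞
    · simp [hu]
    · change -((f u : ℝ≥0∞) : EReal) - _ ≤ _
      rw [hterm x u hu]
      exact_mod_cast h u hu
  have hcoe : ∀ x, Sgamma γ f x = ((Sgamma γ f x).toReal : EReal) := by
    intro x
    obtain ⟨u, hu⟩ := hproper
    have htop : Sgamma γ f x ≤ ((0 : ℝ) : EReal) := hle x 0 fun u _ => by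
      have h₁ : 0 ≤ (f u).toReal := ENNReal.toReal_nonneg
      have h₂ : 0 ≤ γ / 2 * ‖u - x‖ ^ 2 := by positivity
      linarith
    exact (EReal.coe_toReal (ne_top_of_le_ne_top (EReal.coe_ne_top _) htop)
      (ne_bot_of_le_ne_bot (EReal.coe_ne_bot _) (hge x u hu))).symm
  refine ⟨fun x => (Sgamma γ f x).toReal, hcoe, fun x u hu => ?_, fun x r h => ?_⟩
  · have := hge x u hu
    rw [hcoe x] at this
    exact_mod_cast this
  · have := hle x r h
    rw [hcoe x] at this
    exact_mod_cast this

/-- The quadratic identity along a segment. -/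
theorem norm_sub_convexComb_sq {V : Type*} [NormedAddCommGroup V] [InnerProductSpace ℝ V]
    (u x y : V) (t : ℝ) :
    ‖u - ((1 - t) • x + t • y)‖ ^ 2
      = (1 - t) * ‖u - x‖ ^ 2 + t * ‖u - y‖ ^ 2 - t * (1 - t) * ‖x - y‖ ^ 2 := by
  have h : u - ((1 - t) • x + t • y) = (1 - t) • (u - x) + t • (u - y) := by module
  have h' : x - y = (u - y) - (u - x) := by abel
  rw [h, h', norm_add_sq_real, norm_sub_sq_real (u - y), norm_smul, norm_smul, mul_pow, mul_pow,
    Real.norm_eq_abs, Real.norm_eq_abs, sq_abs, sq_abs, real_inner_smul_left,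
    real_inner_smul_right, real_inner_comm (u - y)]
  ring

/-- Completing the square: with `(ρ - γ) w = ρ y - γ z`, the difference of two squared distances
is a squared distance up to an additive constant. -/
theorem norm_sub_sq_sub_eq {V : Type*} [NormedAddCommGroup V] [InnerProductSpace ℝ V]
    {γ ρ : ℝ} {w y z : V} (hw : (ρ - γ) • w = ρ • y - γ • z) (x : V) :
    ρ * ‖x - y‖ ^ 2 - γ * ‖x - z‖ ^ 2
      = (ρ - γ) * ‖x - w‖ ^ 2 + (ρ * ‖w - y‖ ^ 2 - γ * ‖w - z‖ ^ 2) := by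
  have hy : x - y = (x - w) + (w - y) := by abel
  have hz : x - z = (x - w) + (w - z) := by abel
  have hzero : ρ * inner ℝ (x - w) (w - y) - γ * inner ℝ (x - w) (w - z) = 0 := by
    rw [← real_inner_smul_right, ← real_inner_smul_right, ← inner_sub_right]
    have : ρ • (w - y) - γ • (w - z) = (ρ - γ) • w - (ρ • y - γ • z) := by module
    rw [this, hw, sub_self, inner_zero_right]
  rw [hy, hz, norm_add_sq_real, norm_add_sq_real]
  linear_combination 2 * hzero

/-- For `0 < γ < ρ` and proper l.s.c. `f : V → [0,∞]`, both proximal points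
exist and are unique, and if `z = prox_{((ρ-γ)/(ργ))·S_γ(f)}(y)` then
`prox_{S_γ²(f)/ρ}(y) = (ρy - γz)/(ρ-γ)`. -/
theorem statement14 {V : Type*} [NormedAddCommGroup V] [InnerProductSpace ℝ V]
    [CompleteSpace V] [TopologicalSpace.SeparableSpace V]
    (f : V → ℝ≥0∞) (hlsc : LowerSemicontinuous f) (hproper : ∃ x, f x ≠ ∞)
    (γ ρ : ℝ) (hγ : 0 < γ) (hγρ : γ < ρ) (y : V) :
    (∃! z : V, IsProx (fun x => (((ρ - γ) / (ρ * γ) : ℝ) : EReal) * Sgamma γ f x) y z) ∧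
    (∃! w : V, IsProx (fun x => ((ρ⁻¹ : ℝ) : EReal) * Sgamma2 γ f x) y w) ∧
    (∀ z : V, IsProx (fun x => (((ρ - γ) / (ρ * γ) : ℝ) : EReal) * Sgamma γ f x) y z →
      IsProx (fun x => ((ρ⁻¹ : ℝ) : EReal) * Sgamma2 γ f x) y
        ((ρ - γ)⁻¹ • (ρ • y - γ • z))) := by
  obtain ⟨s, hs, hge, hle⟩ := exists_real_Sgamma hproper hγ
  have hρ : 0 < ρ := hγ.trans hγρ
  have hd : 0 < ρ - γ := sub_pos.2 hγρ
  set c : ℝ := (ρ - γ) / (ρ * γ) with hc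
  have hc0 : 0 < c := by positivity
  have hcγ : c * γ = 1 - γ / ρ := by rw [hc]; field_simp
  have hsemi : ∀ (a b : V) (t : ℝ), 0 ≤ t → t ≤ 1 →
      s ((1 - t) • a + t • b)
        ≤ (1 - t) * s a + t * s b + γ / 2 * (t * (1 - t) * ‖a - b‖ ^ 2) := by
    intro a b t ht ht1
    refine hle _ _ fun u hu => ?_
    rw [norm_sub_convexComb_sq]
    linarith [mul_le_mul_of_nonneg_left (hge a u hu) (sub_nonneg.2 ht1),
      mul_le_mul_of_nonneg_left (hge b u hu) ht]
  set F : V → ℝ := fun x => c * s x + 1 / 2 * ‖x - y‖ ^ 2 with hF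
  have hprox : ∀ z, IsProx (fun x => (c : EReal) * Sgamma γ f x) y z ↔ ∀ x, F z ≤ F x := by
    intro z
    simp only [IsProx, hs, hF]
    norm_cast
  have hlscF : LowerSemicontinuous F := by
    have hlscs : LowerSemicontinuous s := by
      intro z r hr
      obtain ⟨u, hu, hur⟩ : ∃ u, f u ≠ ∞ ∧ r < -(f u).toReal - γ / 2 * ‖u - z‖ ^ 2 := by
        by_contra! h
        exact absurd (hle z r h) (not_le.2 hr)
      have hcont : Continuous fun x => -(f u).toReal - γ / 2 * ‖u - x‖ ^ 2 := by fun_prop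
      filter_upwards [hcont.continuousAt.eventually (lt_mem_nhds hur)] with x hx
      exact hx.trans_le (hge x u hu)
    have hcs : LowerSemicontinuous fun x => c * s x :=
      (continuous_const_mul c).comp_lowerSemicontinuous hlscs
        (fun _ _ h => mul_le_mul_of_nonneg_left h hc0.le)
    exact hcs.add (by fun_prop : Continuous fun x => 1 / 2 * ‖x - y‖ ^ 2).lowerSemicontinuous
  have hbddF : BddBelow (Set.range F) := by
    obtain ⟨u, hu⟩ := hproper
    set v : V := (ρ - (ρ - γ))⁻¹ • (ρ • y - (ρ - γ) • u) with hv
    have hv' : (ρ - (ρ - γ)) • v = ρ • y - (ρ - γ) • u := by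
      rw [hv, smul_inv_smul₀]
      linarith
    refine ⟨-c * (f u).toReal
      + 1 / (2 * ρ) * (ρ * ‖v - y‖ ^ 2 - (ρ - γ) * ‖v - u‖ ^ 2), ?_⟩
    rintro _ ⟨x, rfl⟩
    have h₁ := mul_le_mul_of_nonneg_left (hge x u hu) hc0.le
    have h₂ := norm_sub_sq_sub_eq hv' x
    have h₃ : 0 ≤ 1 / (2 * ρ) * ((ρ - (ρ - γ)) * ‖x - v‖ ^ 2) := by
      have : 0 ≤ ρ - (ρ - γ) := by linarith
      positivity
    have h₄ : c * (-(f u).toReal - γ / 2 * ‖u - x‖ ^ 2) + 1 / 2 * ‖x - y‖ ^ 2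
        = -c * (f u).toReal + 1 / (2 * ρ) * (ρ * ‖x - y‖ ^ 2 - (ρ - γ) * ‖x - u‖ ^ 2) := by
      rw [norm_sub_rev u x, hc]
      field_simp
      ring
    rw [h₂] at h₄
    simp only [hF]
    linarith
  have hexists : ∃! z, ∀ x, F z ≤ F x := by
    refine existsUnique_forall_le_of_midpoint_convex (k := γ / ρ / 8) (by positivity)
      hbddF hlscF fun a b => ?_
    have h₁ := mul_le_mul_of_nonneg_left
      (hsemi a b (1 / 2) (by norm_num) (by norm_num)) hc0.le
    have h₂ := norm_sub_convexComb_sq y a b (1 / 2)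
    norm_num at h₁ h₂ ⊢
    simp only [hF]
    rw [norm_sub_rev _ y, h₂, norm_sub_rev y a, norm_sub_rev y b]
    have h₃ : c * (γ / 2 * (1 / 4 * ‖a - b‖ ^ 2)) = (1 - γ / ρ) * (1 / 8 * ‖a - b‖ ^ 2) := by
      rw [← hcγ]
      ring
    linarith
  have hdual : ∀ z, (∀ x, F z ≤ F x) → ∀ w, (ρ - γ) • w = ρ • y - γ • z →
      ∀ x, s z + γ / 2 * ‖z - w‖ ^ 2 ≤ s x + γ / 2 * ‖x - w‖ ^ 2 := by
    intro z hz w hw x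
    have hsplit : ∀ p, F p = c * (s p + γ / 2 * ‖p - w‖ ^ 2) + γ / (2 * ρ) * ‖p - z‖ ^ 2
        + (1 / (2 * ρ)) * (ρ * ‖w - y‖ ^ 2 - γ * ‖w - z‖ ^ 2) := by
      intro p
      have h := norm_sub_sq_sub_eq hw p
      simp only [hF, hc]
      field_simp
      linear_combination γ * h
    have hstep : ∀ t : ℝ, 0 < t → t ≤ 1 →
        c * (s z + γ / 2 * ‖z - w‖ ^ 2)
          ≤ c * (s x + γ / 2 * ‖x - w‖ ^ 2) + t * (γ / (2 * ρ) * ‖x - z‖ ^ 2) := by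
      intro t ht ht1
      have h₁ := hz ((1 - t) • z + t • x)
      rw [hsplit, hsplit] at h₁
      have h₂ := mul_le_mul_of_nonneg_left (hsemi z x t ht.le ht1) hc0.le
      have h₃ := norm_sub_convexComb_sq w z x t
      have h₄ : (1 - t) • z + t • x - z = t • (x - z) := by module
      rw [norm_sub_rev w, norm_sub_rev w z, norm_sub_rev w x] at h₃
      rw [h₃, h₄, norm_smul, mul_pow, Real.norm_eq_abs, sq_abs, sub_self, norm_zero] at h₁
      refine le_of_mul_le_mul_left ?_ ht
      linarith
    refine le_of_mul_le_mul_left ?_ hc0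
    have hlim : Tendsto (fun t : ℝ => c * (s x + γ / 2 * ‖x - w‖ ^ 2)
        + t * (γ / (2 * ρ) * ‖x - z‖ ^ 2)) (𝓝[>] 0) (𝓝 (c * (s x + γ / 2 * ‖x - w‖ ^ 2))) := by
      refine tendsto_nhdsWithin_of_tendsto_nhds ?_
      refine Continuous.tendsto' (by fun_prop) _ _ (by simp)
    refine ge_of_tendsto hlim ?_
    filter_upwards [Ioc_mem_nhdsGT (zero_lt_one' ℝ)] with t ht
    exact hstep t ht.1 ht.2
  have hG : ∀ z, (∀ x, F z ≤ F x) → ∀ w, (ρ - γ) • w = ρ • y - γ • z → ∃ r : ℝ,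
      ((ρ⁻¹ : ℝ) : EReal) * Sgamma2 γ f w + ((1 / 2 * ‖w - y‖ ^ 2 : ℝ) : EReal) = r ∧
      ∀ x, ((r + (ρ - γ) / (2 * ρ) * ‖x - w‖ ^ 2 : ℝ) : EReal) ≤
        ((ρ⁻¹ : ℝ) : EReal) * Sgamma2 γ f x + ((1 / 2 * ‖x - y‖ ^ 2 : ℝ) : EReal) := by
    intro z hz w hw
    have hlb : ∀ x, ((-s z - γ / 2 * ‖z - x‖ ^ 2 : ℝ) : EReal) ≤ Sgamma2 γ f x := by
      intro x
      have := le_iSup (fun u => -(Sgamma γ f u) - ((γ / 2 * ‖u - x‖ ^ 2 : ℝ) : EReal)) z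
      rw [hs z] at this
      exact_mod_cast this
    have heq : Sgamma2 γ f w = ((-s z - γ / 2 * ‖z - w‖ ^ 2 : ℝ) : EReal) := by
      refine le_antisymm (iSup_le fun u => ?_) (hlb w)
      rw [hs u]
      norm_cast
      linarith [hdual z hz w hw u]
    refine ⟨ρ⁻¹ * (-s z - γ / 2 * ‖z - w‖ ^ 2) + 1 / 2 * ‖w - y‖ ^ 2, ?_, fun x => ?_⟩
    · rw [heq]
      norm_cast
    · have hmul : ((ρ⁻¹ * (-s z - γ / 2 * ‖z - x‖ ^ 2) : ℝ) : EReal)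
          ≤ ((ρ⁻¹ : ℝ) : EReal) * Sgamma2 γ f x := by
        rw [EReal.coe_mul]
        exact mul_le_mul_of_nonneg_left (hlb x) (by exact_mod_cast (inv_pos.2 hρ).le)
      refine le_trans ?_ (add_le_add_left hmul _)
      norm_cast
      have h := norm_sub_sq_sub_eq hw x
      rw [norm_sub_rev z w, norm_sub_rev z x]
      refine le_of_eq ?_
      field_simp
      linarith
  have hw : ∀ z : V, (ρ - γ) • ((ρ - γ)⁻¹ • (ρ • y - γ • z)) = ρ • y - γ • z :=
    fun z => smul_inv_smul₀ hd.ne' _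
  have hthird : ∀ z, (∀ x, F z ≤ F x) →
      IsProx (fun x => ((ρ⁻¹ : ℝ) : EReal) * Sgamma2 γ f x) y
        ((ρ - γ)⁻¹ • (ρ • y - γ • z)) := by
    intro z hz x
    obtain ⟨r, hr, hx⟩ := hG z hz _ (hw z)
    simp only [hr]
    refine le_trans ?_ (hx x)
    norm_cast
    exact le_add_of_nonneg_right (by positivity)
  refine ⟨by simpa only [hprox] using hexists, ?_, fun z hz => hthird z ((hprox z).1 hz)⟩
  obtain ⟨z, hz, -⟩ := hexists
  refine ⟨_, hthird z hz, fun v hv => ?_⟩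
  obtain ⟨r, hr, hx⟩ := hG z hz _ (hw z)
  have h := (hx v).trans (hv ((ρ - γ)⁻¹ • (ρ • y - γ • z)))
  simp only [hr] at h
  norm_cast at h
  have hcoef : 0 < (ρ - γ) / (2 * ρ) := by positivity
  have hsq : ‖v - (ρ - γ)⁻¹ • (ρ • y - γ • z)‖ ^ 2 = 0 := by
    nlinarith [sq_nonneg ‖v - (ρ - γ)⁻¹ • (ρ • y - γ • z)‖]
  exact sub_eq_zero.1 (norm_eq_zero.1 (by simpa using hsq))
end
end
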